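/- Let N ≥ 4 be an integer, Ω ⊂ ℝ^N a nonempty bounded open set, x₀ ∈ Ω, and a, b : ℝ^N → ℝ continuous functions positive on the closure of Ω with a(x₀) = b(x₀) = γ₀ and γ₀ = min_{x∈Ω̄} a(x) = min_{x∈Ω̄} b(x). Suppose a admits the expansion of order k at x₀ with coefficient A_k > 0 and b admits the expansion of order l at x₀ with coefficient B_l > 0, where k > 2 and l > 2. Then for every λ > 0 there exist smooth functions u, v compactly supported in Ω with ‖u‖_{L^q(Ω)} = ‖v‖_{L^q(Ω)} = 1 such that F_λ(u,v) < γ₀ S. -/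

import Mathlib

open MeasureTheory Real Filter Topology

noncomputable section

/-!
Both components are taken equal to the `L^q`-normalization of one truncated bubble
`u = φ · (ε² + |x - x₀|²)^(-(N-2)/2)`. Since `a` and `b` exceed `γ₀` by only `o(|x - x₀|²)`, and
`|x - x₀| |∇u|` is controlled by `u` near `x₀`, the weighted energy of `u` is at most
`γ₀ S ‖u‖_q² + (λ/2) ∫ u² + O(1)` as `ε → 0`. The coupling term `-λ ∫ u²` wins, because in dimension
`N ≥ 4` the limit profile `|x - x₀|^(-2(N-2))` of `u²` is not integrable at `x₀`, so that
`∫ u² → ∞` by Fatou's lemma.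
-/

open Metric Module
open scoped ContDiff

section Integration

theorem tendsto_integral_atTop_of_not_integrable {ι α : Type*} [MeasurableSpace α] {μ : Measure α}
    {l : Filter ι} [l.IsCountablyGenerated] [l.NeBot] {f : ι → α → ℝ} {F : α → ℝ}
    (hf : ∀ i, Integrable (f i) μ) (hf₀ : ∀ i, 0 ≤ᵐ[μ] f i)
    (hlim : ∀ᵐ x ∂μ, Tendsto (fun i => f i x) l (𝓝 (F x))) (hF : ¬ Integrable F μ) :
    Tendsto (fun i => ∫ x, f i x ∂μ) l atTop := by
  have hF_top : ∫⁻ x, ‖F x‖ₑ ∂μ = ⊤ := by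
    have hF_meas := aestronglyMeasurable_of_tendsto_ae l (fun i => (hf i).1) hlim
    by_contra hfin
    exact hF ⟨hF_meas, lt_top_iff_ne_top.2 hfin⟩
  have fatou : ∫⁻ x, ‖F x‖ₑ ∂μ ≤ liminf (fun i => ∫⁻ x, ‖f i x‖ₑ ∂μ) l :=
    lintegral_congr_ae (hlim.mono fun x hx => hx.enorm.liminf_eq) ▸
      lintegral_liminf_le' fun i => (hf i).1.enorm
  have htop : Tendsto (fun i => ∫⁻ x, ‖f i x‖ₑ ∂μ) l (𝓝 ⊤) :=
    tendsto_of_le_liminf_of_limsup_le (hF_top ▸ fatou) le_top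
  refine ENNReal.tendsto_ofReal_nhds_top.1 (htop.congr fun i => ?_)
  rw [ofReal_integral_eq_lintegral_ofReal (hf i) (hf₀ i)]
  exact lintegral_congr_ae ((hf₀ i).mono fun x hx => enorm_of_nonneg hx)

theorem integrable_mul_sq_norm_fderiv {E : Type*} [NormedAddCommGroup E] [NormedSpace ℝ E]
    [MeasurableSpace E] [BorelSpace E] {μ : Measure E} {c u : E → ℝ} {s : Set E}
    (hc : LocallyIntegrableOn c s μ) (hu : ContDiff ℝ 1 u) (hcs : HasCompactSupport u)
    (hus : tsupport u ⊆ s) : Integrable (fun x => c x * ‖fderiv ℝ u x‖ ^ 2) μ := by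
  have hcont : Continuous fun x => ‖fderiv ℝ u x‖ ^ 2 :=
    (hu.continuous_fderiv one_ne_zero).norm.pow 2
  rw [← integrableOn_iff_integrable_of_support_subset (s := tsupport u) fun x hx =>
    support_fderiv_subset ℝ fun h => hx (by simp [h])]
  exact (hc.integrableOn_compact_subset hus hcs).mul_continuousOn hcont.continuousOn hcs

variable {E : Type*} [NormedAddCommGroup E] [NormedSpace ℝ E] [FiniteDimensional ℝ E]
  [MeasurableSpace E] [BorelSpace E] {μ : Measure E} [μ.IsAddHaarMeasure]

theorem integrable_comp_dilation {g : E → ℝ} (hg : Integrable g μ) {ε : ℝ} (hε : ε ≠ 0) (x₀ : E) :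
    Integrable (fun x => g (ε⁻¹ • (x - x₀))) μ :=
  ((integrable_comp_smul_iff μ g (inv_ne_zero hε)).2 hg).comp_sub_right x₀

theorem integral_comp_dilation (g : E → ℝ) {ε : ℝ} (hε : 0 ≤ ε) (x₀ : E) :
    ∫ x, g (ε⁻¹ • (x - x₀)) ∂μ = ε ^ finrank ℝ E * ∫ x, g x ∂μ := by
  rw [integral_sub_right_eq_self (fun x => g (ε⁻¹ • x)) x₀,
    Measure.integral_comp_inv_smul_of_nonneg μ g hε, smul_eq_mul]

theorem integrableOn_ball_norm_rpow_iff [Nontrivial E] {r : ℝ} (hr : 0 < r) (p : ℝ) :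
    IntegrableOn (fun x : E => ‖x‖ ^ p) (ball 0 r) μ ↔ -(finrank ℝ E : ℝ) < p := by
  have hrad : Set.EqOn (fun t : ℝ => t ^ (finrank ℝ E - 1) • t ^ p)
      (fun t => t ^ ((finrank ℝ E : ℝ) - 1 + p)) (Set.Ioo 0 r) := fun t ht => by
    simp only [smul_eq_mul]
    rw [← rpow_natCast, ← rpow_add ht.1, Nat.cast_pred finrank_pos]
  rw [integrableOn_fun_norm_addHaar μ (f := fun t => t ^ p),
    integrableOn_congr_fun hrad measurableSet_Ioo, intervalIntegral.integrableOn_Ioo_rpow_iff hr]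
  constructor <;> intro h <;> linarith

end Integration

theorem exists_normalized_of_rayleigh_lt {E : Type*} [NormedAddCommGroup E] [NormedSpace ℝ E]
    [MeasurableSpace E] {μ : Measure E} {c u : E → ℝ} {lam m q : ℝ} (hq : q ≠ 0)
    (hu : Differentiable ℝ u) (hpos : 0 < ∫ x, |u x| ^ q ∂μ)
    (hlt : ∫ x, c x * ‖fderiv ℝ u x‖ ^ 2 ∂μ - lam * ∫ x, u x ^ 2 ∂μ <
      m * (∫ x, |u x| ^ q ∂μ) ^ (2 / q)) :
    ∃ t : ℝ, (∫ x, |t * u x| ^ q ∂μ) ^ (1 / q) = 1 ∧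
      ∫ x, c x * ‖fderiv ℝ (fun y => t * u y) x‖ ^ 2 ∂μ - lam * ∫ x, (t * u x) ^ 2 ∂μ < m := by
  set Q := ∫ x, |u x| ^ q ∂μ
  set t := Q ^ (-(1 / q))
  have ht : 0 < t := rpow_pos_of_pos hpos _
  have htq : t ^ q = Q⁻¹ := by
    rw [← rpow_mul hpos.le, neg_mul, one_div_mul_cancel hq, rpow_neg_one]
  have ht2 : t ^ 2 * Q ^ (2 / q) = 1 := by
    rw [← rpow_natCast, ← rpow_mul hpos.le, ← rpow_add hpos, Nat.cast_ofNat]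
    ring_nf
    exact rpow_zero _
  have hmass (x : E) : |t * u x| ^ q = Q⁻¹ * |u x| ^ q := by
    rw [abs_mul, abs_of_pos ht, mul_rpow ht.le (abs_nonneg _), htq]
  have hgrad (x : E) : c x * ‖fderiv ℝ (fun y => t * u y) x‖ ^ 2 =
      t ^ 2 * (c x * ‖fderiv ℝ u x‖ ^ 2) := by
    rw [fderiv_const_mul (hu x), norm_smul, mul_pow, norm_of_nonneg ht.le]
    ring
  refine ⟨t, ?_, ?_⟩
  · simp only [hmass]
    rw [integral_const_mul, inv_mul_cancel₀ hpos.ne', one_rpow]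
  · simp only [hgrad, mul_pow, integral_const_mul]
    calc t ^ 2 * ∫ x, c x * ‖fderiv ℝ u x‖ ^ 2 ∂μ - lam * (t ^ 2 * ∫ x, u x ^ 2 ∂μ)
        = t ^ 2 * (∫ x, c x * ‖fderiv ℝ u x‖ ^ 2 ∂μ - lam * ∫ x, u x ^ 2 ∂μ) := by ring
      _ < t ^ 2 * (m * Q ^ (2 / q)) := by gcongr
      _ = m := by rw [mul_left_comm, ht2, mul_one]

theorem eventually_le_add_mul_sq_of_tendsto {E : Type*} [NormedAddCommGroup E] {a : E → ℝ} {x₀ : E}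
    {k A η : ℝ} (hk : 2 < k) (hη : 0 < η)
    (h : Tendsto (fun x => (a x - a x₀ - A * ‖x - x₀‖ ^ k) / ‖x - x₀‖ ^ k) (𝓝[≠] x₀) (𝓝 0)) :
    ∀ᶠ x in 𝓝 x₀, a x ≤ a x₀ + η * ‖x - x₀‖ ^ 2 := by
  have hquot : ∀ᶠ x in 𝓝 x₀, x ≠ x₀ → (a x - a x₀ - A * ‖x - x₀‖ ^ k) / ‖x - x₀‖ ^ k < 1 :=
    eventually_nhdsWithin_iff.1 (h.eventually_lt_const one_pos)
  have hsmall : ∀ᶠ x in 𝓝 x₀, (A + 1) * ‖x - x₀‖ ^ (k - 2) < η := by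
    have hcont : ContinuousAt (fun x => (A + 1) * ‖x - x₀‖ ^ (k - 2)) x₀ :=
      continuousAt_const.mul (ContinuousAt.rpow_const (by fun_prop) (Or.inr (by linarith)))
    refine hcont.eventually_lt_const ?_
    simpa [zero_rpow (sub_pos.2 hk).ne'] using hη
  filter_upwards [hquot, hsmall] with x hx_quot hx_small
  rcases eq_or_ne x x₀ with rfl | hne
  · simp
  have hpos : 0 < ‖x - x₀‖ := norm_pos_iff.2 (sub_ne_zero.2 hne)
  have hsplit : ‖x - x₀‖ ^ k = ‖x - x₀‖ ^ (k - 2) * ‖x - x₀‖ ^ 2 := by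
    rw [← rpow_natCast, ← rpow_add hpos, Nat.cast_ofNat, sub_add_cancel]
  calc a x ≤ a x₀ + (A + 1) * ‖x - x₀‖ ^ k := by
        have := (div_lt_one (rpow_pos_of_pos hpos k)).1 (hx_quot hne)
        linarith
    _ = a x₀ + (A + 1) * ‖x - x₀‖ ^ (k - 2) * ‖x - x₀‖ ^ 2 := by rw [hsplit, mul_assoc]
    _ ≤ a x₀ + η * ‖x - x₀‖ ^ 2 := by gcongr

/-- The critical Sobolev exponent `2n/(n-2)` in dimension `n`, meant for `n > 2`. -/
def sobolevExponent (n : ℕ) : ℝ := 2 * (n : ℝ) / ((n : ℝ) - 2)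

theorem sobolevExponent_pos {n : ℕ} (hn : 2 < n) : 0 < sobolevExponent n := by
  have : (2 : ℝ) < n := by exact_mod_cast hn
  exact div_pos (by linarith) (by linarith)

theorem two_div_sobolevExponent (n : ℕ) : 2 / sobolevExponent n = ((n : ℝ) - 2) / n := by
  rw [sobolevExponent, div_div_eq_mul_div, mul_div_mul_left _ _ two_ne_zero]

section Bubble

variable {E : Type*} [NormedAddCommGroup E] {n : ℕ} {x₀ x : E} {ε : ℝ}

/-- The unnormalized Aubin–Talenti bubble of dimension `n`, centre `x₀` and concentration scale `ε`.
For `n = dim E` its scalar multiples are the extremals of the Sobolev inequality. -/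
def bubble (n : ℕ) (x₀ : E) (ε : ℝ) (x : E) : ℝ :=
  (ε ^ 2 + ‖x - x₀‖ ^ 2) ^ (-(((n : ℝ) - 2) / 2))

theorem bubble_nonneg : 0 ≤ bubble n x₀ ε x := by unfold bubble; positivity

theorem bubble_pos (hε : ε ≠ 0) : 0 < bubble n x₀ ε x := by unfold bubble; positivity

theorem sq_bubble : bubble n x₀ ε x ^ 2 = (ε ^ 2 + ‖x - x₀‖ ^ 2) ^ (-((n : ℝ) - 2)) := by
  rw [bubble, ← rpow_natCast, ← rpow_mul (by positivity)]
  congr 1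
  push_cast
  ring

theorem sq_bubble_zero : bubble n x₀ 0 x ^ 2 = ‖x - x₀‖ ^ (-(2 * ((n : ℝ) - 2))) := by
  rw [sq_bubble, zero_pow two_ne_zero, zero_add, ← rpow_natCast, ← rpow_mul (norm_nonneg _)]
  congr 1
  push_cast
  ring

theorem bubble_rpow_sobolevExponent (hn : 2 < n) :
    bubble n x₀ ε x ^ sobolevExponent n = (ε ^ 2 + ‖x - x₀‖ ^ 2) ^ (-(n : ℝ)) := by
  have hn' : (n : ℝ) - 2 ≠ 0 := sub_ne_zero.2 (by exact_mod_cast hn.ne')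
  rw [bubble, ← rpow_mul (by positivity), sobolevExponent]
  congr 1
  field_simp

theorem continuousAt_bubble_scale (hx : x ≠ x₀) (s : ℝ) :
    ContinuousAt (fun ε => bubble n x₀ ε x) s := by
  have hpos : 0 < ‖x - x₀‖ := norm_pos_iff.2 (sub_ne_zero.2 hx)
  exact ContinuousAt.rpow_const (by fun_prop) (Or.inl (by positivity))

theorem bubble_le_of_le_norm {r : ℝ} (hn : 2 ≤ n) (hr : 0 < r) (hx : r ≤ ‖x - x₀‖) :
    bubble n x₀ ε x ≤ bubble n x₀ r x₀ := by
  have hn' : (2 : ℝ) ≤ n := by exact_mod_cast hn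
  refine rpow_le_rpow_of_nonpos (by positivity) ?_ (by linarith)
  rw [sub_self, norm_zero, zero_pow two_ne_zero, add_zero]
  exact (pow_le_pow_left₀ hr.le hx 2).trans (le_add_of_nonneg_left (sq_nonneg ε))

theorem bubble_rpow_le_of_le_norm {r : ℝ} (hn : 2 < n) (hr : 0 < r) (hx : r ≤ ‖x - x₀‖) :
    bubble n x₀ ε x ^ sobolevExponent n ≤
      (r ^ 2 / (1 + r ^ 2)) ^ (-(n : ℝ)) * bubble n x₀ 1 x ^ sobolevExponent n := by
  rw [bubble_rpow_sobolevExponent hn, bubble_rpow_sobolevExponent hn,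
    ← mul_rpow (by positivity) (by positivity)]
  refine rpow_le_rpow_of_nonpos (by positivity) ?_ (neg_nonpos.2 n.cast_nonneg)
  have hsq : r ^ 2 ≤ ‖x - x₀‖ ^ 2 := by gcongr
  rw [div_mul_eq_mul_div, div_le_iff₀ (by positivity)]
  nlinarith [mul_nonneg (sq_nonneg ε) (sq_nonneg r), sq_nonneg ε]

theorem bubble_profile_eq_dilation [NormedSpace ℝ E] (hε : 0 < ε) :
    (ε ^ 2 + ‖x - x₀‖ ^ 2) ^ (-(n : ℝ)) =
      ((ε ^ n) ^ 2)⁻¹ * (1 + ‖ε⁻¹ • (x - x₀)‖ ^ 2) ^ (-(n : ℝ)) := by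
  have hfactor : ε ^ 2 + ‖x - x₀‖ ^ 2 = ε ^ 2 * (1 + ‖ε⁻¹ • (x - x₀)‖ ^ 2) := by
    rw [norm_smul, norm_inv, norm_of_nonneg hε.le]
    field_simp
  rw [hfactor, mul_rpow (by positivity) (by positivity), rpow_neg (by positivity), rpow_natCast,
    pow_right_comm]

end Bubble

section Gradient

variable {E : Type*} [NormedAddCommGroup E] [InnerProductSpace ℝ E] {n : ℕ} {x₀ x : E} {ε : ℝ}

theorem contDiff_bubble (hε : ε ≠ 0) : ContDiff ℝ ∞ (bubble n x₀ ε) :=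
  (contDiff_const.add ((contDiff_id.sub contDiff_const).norm_sq ℝ)).rpow_const_of_ne
    fun x => by positivity

theorem sq_norm_fderiv_bubble (hε : ε ≠ 0) :
    ‖fderiv ℝ (bubble n x₀ ε) x‖ ^ 2 =
      ((n : ℝ) - 2) ^ 2 * (‖x - x₀‖ ^ 2 * (ε ^ 2 + ‖x - x₀‖ ^ 2) ^ (-(n : ℝ))) := by
  have hpos : 0 < ε ^ 2 + ‖x - x₀‖ ^ 2 := by positivity
  have hbase : HasFDerivAt (fun y => ε ^ 2 + ‖y - x₀‖ ^ 2) (2 • innerSL ℝ (x - x₀)) x :=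
    (((hasFDerivAt_id x).sub_const x₀).norm_sq).const_add (ε ^ 2)
  have hfderiv : fderiv ℝ (bubble n x₀ ε) x = _ :=
    (hbase.rpow_const (p := -(((n : ℝ) - 2) / 2)) (Or.inl hpos.ne')).fderiv
  have hexp : ((ε ^ 2 + ‖x - x₀‖ ^ 2) ^ (-(((n : ℝ) - 2) / 2) - 1)) ^ 2 =
      (ε ^ 2 + ‖x - x₀‖ ^ 2) ^ (-(n : ℝ)) := by
    rw [← rpow_natCast, ← rpow_mul hpos.le]
    congr 1
    push_cast
    ring
  rw [hfderiv, ← Nat.cast_smul_eq_nsmul ℝ, norm_smul, norm_smul, innerSL_apply_norm,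
    mul_pow, mul_pow, norm_eq_abs, norm_eq_abs, sq_abs, sq_abs, mul_pow, hexp]
  push_cast
  ring

theorem mul_sq_norm_fderiv_bubble_le {γ η w : ℝ} (hη : 0 ≤ η) (hε : ε ≠ 0)
    (hw : w ≤ γ + η * ‖x - x₀‖ ^ 2) :
    w * ‖fderiv ℝ (bubble n x₀ ε) x‖ ^ 2 ≤
      γ * ‖fderiv ℝ (bubble n x₀ ε) x‖ ^ 2 + η * ((n : ℝ) - 2) ^ 2 * bubble n x₀ ε x ^ 2 := by
  have hpos : 0 < ε ^ 2 + ‖x - x₀‖ ^ 2 := by positivity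
  have hle : ‖x - x₀‖ ^ 2 ≤ ε ^ 2 + ‖x - x₀‖ ^ 2 := le_add_of_nonneg_left (sq_nonneg ε)
  have hgrad : ‖x - x₀‖ ^ 2 * ‖fderiv ℝ (bubble n x₀ ε) x‖ ^ 2 ≤
      ((n : ℝ) - 2) ^ 2 * bubble n x₀ ε x ^ 2 := by
    calc ‖x - x₀‖ ^ 2 * ‖fderiv ℝ (bubble n x₀ ε) x‖ ^ 2
        = ((n : ℝ) - 2) ^ 2 *
            ((‖x - x₀‖ ^ 2) ^ 2 * (ε ^ 2 + ‖x - x₀‖ ^ 2) ^ (-(n : ℝ))) := by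
          rw [sq_norm_fderiv_bubble hε]
          ring
      _ ≤ ((n : ℝ) - 2) ^ 2 *
            ((ε ^ 2 + ‖x - x₀‖ ^ 2) ^ 2 * (ε ^ 2 + ‖x - x₀‖ ^ 2) ^ (-(n : ℝ))) := by gcongr
      _ = ((n : ℝ) - 2) ^ 2 * bubble n x₀ ε x ^ 2 := by
          rw [sq_bubble, neg_sub, sub_eq_add_neg 2, rpow_add hpos, rpow_ofNat]
  calc w * ‖fderiv ℝ (bubble n x₀ ε) x‖ ^ 2
      ≤ (γ + η * ‖x - x₀‖ ^ 2) * ‖fderiv ℝ (bubble n x₀ ε) x‖ ^ 2 := by gcongr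
    _ = γ * ‖fderiv ℝ (bubble n x₀ ε) x‖ ^ 2 +
          η * (‖x - x₀‖ ^ 2 * ‖fderiv ℝ (bubble n x₀ ε) x‖ ^ 2) := by ring
    _ ≤ _ := by
      rw [mul_assoc η]
      gcongr

theorem sq_norm_fderiv_bubble_le_of_le_norm {r : ℝ} (hn : 1 ≤ n) (hε : ε ≠ 0) (hr : 0 < r)
    (hx : r ≤ ‖x - x₀‖) :
    ‖fderiv ℝ (bubble n x₀ ε) x‖ ^ 2 ≤ ((n : ℝ) - 2) ^ 2 * (r ^ 2) ^ (1 - (n : ℝ)) := by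
  have hn' : (1 : ℝ) ≤ n := by exact_mod_cast hn
  have hpos : 0 < ε ^ 2 + ‖x - x₀‖ ^ 2 := by positivity
  have hle : ‖x - x₀‖ ^ 2 ≤ ε ^ 2 + ‖x - x₀‖ ^ 2 := le_add_of_nonneg_left (sq_nonneg ε)
  rw [sq_norm_fderiv_bubble hε]
  gcongr
  calc ‖x - x₀‖ ^ 2 * (ε ^ 2 + ‖x - x₀‖ ^ 2) ^ (-(n : ℝ))
      ≤ (ε ^ 2 + ‖x - x₀‖ ^ 2) * (ε ^ 2 + ‖x - x₀‖ ^ 2) ^ (-(n : ℝ)) := by gcongr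
    _ = (ε ^ 2 + ‖x - x₀‖ ^ 2) ^ (1 - (n : ℝ)) := by
      rw [sub_eq_add_neg 1, rpow_add hpos, rpow_one]
    _ ≤ (r ^ 2) ^ (1 - (n : ℝ)) :=
      rpow_le_rpow_of_nonpos (by positivity) ((pow_le_pow_left₀ hr.le hx 2).trans hle)
        (by linarith)

theorem sq_norm_fderiv_bubble_eq_dilation (hε : 0 < ε) :
    ‖fderiv ℝ (bubble n x₀ ε) x‖ ^ 2 = ((n : ℝ) - 2) ^ 2 * (ε ^ 2 * ((ε ^ n) ^ 2)⁻¹) *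
      (‖ε⁻¹ • (x - x₀)‖ ^ 2 * (1 + ‖ε⁻¹ • (x - x₀)‖ ^ 2) ^ (-(n : ℝ))) := by
  have hnorm : ‖x - x₀‖ ^ 2 = ε ^ 2 * ‖ε⁻¹ • (x - x₀)‖ ^ 2 := by
    rw [norm_smul, norm_inv, norm_of_nonneg hε.le]
    field_simp
  rw [sq_norm_fderiv_bubble hε.ne', bubble_profile_eq_dilation hε]
  conv_lhs => rw [hnorm]
  ring

end Gradient

section Integrals

variable {E : Type*} [NormedAddCommGroup E] [MeasurableSpace E]

/-- The constant `K₁`, which is the Dirichlet energy of the bubble of scale `1`. -/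
def bubbleEnergy (n : ℕ) (μ : Measure E) : ℝ :=
  ((n : ℝ) - 2) ^ 2 * ∫ y, ‖y‖ ^ 2 * (1 + ‖y‖ ^ 2) ^ (-(n : ℝ)) ∂μ

/-- The integral of the critical power of the bubble of scale `1`. -/
def bubbleMass (n : ℕ) (μ : Measure E) : ℝ := ∫ y, (1 + ‖y‖ ^ 2) ^ (-(n : ℝ)) ∂μ

/-- The Sobolev quotient of the bubble; for Lebesgue measure on `ℝⁿ` it is the constant `S`. -/
def bubbleQuotient (n : ℕ) (μ : Measure E) : ℝ :=
  bubbleEnergy n μ / bubbleMass n μ ^ (((n : ℝ) - 2) / n)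

theorem bubbleEnergy_nonneg (n : ℕ) (μ : Measure E) : 0 ≤ bubbleEnergy n μ :=
  mul_nonneg (sq_nonneg _) (integral_nonneg fun y => by simp only [Pi.zero_apply]; positivity)

theorem bubbleMass_nonneg (n : ℕ) (μ : Measure E) : 0 ≤ bubbleMass n μ :=
  integral_nonneg fun y => by simp only [Pi.zero_apply]; positivity

theorem bubbleQuotient_nonneg (n : ℕ) (μ : Measure E) : 0 ≤ bubbleQuotient n μ :=
  div_nonneg (bubbleEnergy_nonneg n μ) (rpow_nonneg (bubbleMass_nonneg n μ) _)

variable [InnerProductSpace ℝ E] [FiniteDimensional ℝ E] [BorelSpace E] {μ : Measure E}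
  [μ.IsAddHaarMeasure] {n : ℕ} {x₀ : E} {ε : ℝ}

theorem integrable_bubbleMass_integrand (hE : finrank ℝ E = n) (hn : 0 < n) :
    Integrable (fun y : E => (1 + ‖y‖ ^ 2) ^ (-(n : ℝ))) μ := by
  have hn' : (0 : ℝ) < n := by exact_mod_cast hn
  have h := integrable_rpow_neg_one_add_norm_sq (E := E) (μ := μ) (r := 2 * n)
    (by rw [hE]; linarith)
  rwa [neg_div, mul_div_cancel_left₀ _ two_ne_zero] at h

theorem integrable_bubbleEnergy_integrand (hE : finrank ℝ E = n) (hn : 2 < n) :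
    Integrable (fun y : E => ‖y‖ ^ 2 * (1 + ‖y‖ ^ 2) ^ (-(n : ℝ))) μ := by
  have hn' : (2 : ℝ) < n := by exact_mod_cast hn
  have hdom := integrable_rpow_neg_one_add_norm_sq (E := E) (μ := μ) (r := 2 * n - 2)
    (by rw [hE]; linarith)
  refine hdom.mono' (Measurable.aestronglyMeasurable (by fun_prop)) (.of_forall fun y => ?_)
  have hpos : 0 < 1 + ‖y‖ ^ 2 := by positivity
  calc ‖‖y‖ ^ 2 * (1 + ‖y‖ ^ 2) ^ (-(n : ℝ))‖
      = ‖y‖ ^ 2 * (1 + ‖y‖ ^ 2) ^ (-(n : ℝ)) := norm_of_nonneg (by positivity)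
    _ ≤ (1 + ‖y‖ ^ 2) * (1 + ‖y‖ ^ 2) ^ (-(n : ℝ)) := by
      gcongr
      exact le_add_of_nonneg_left zero_le_one
    _ = (1 + ‖y‖ ^ 2) ^ (-(2 * (n : ℝ) - 2) / 2) := by
      rw [show -(2 * (n : ℝ) - 2) / 2 = 1 + -n by ring, rpow_add hpos, rpow_one]

theorem bubbleMass_pos (hE : finrank ℝ E = n) (hn : 0 < n) : 0 < bubbleMass n μ :=
  integral_pos_of_integrable_nonneg_nonzero (x := 0)
    (Continuous.rpow_const (by fun_prop) fun y => Or.inl (by positivity))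
    (integrable_bubbleMass_integrand hE hn) (fun y => by simp only [Pi.zero_apply]; positivity)
    (by simp)

theorem integrable_bubble_rpow (hE : finrank ℝ E = n) (hn : 2 < n) (hε : 0 < ε) :
    Integrable (fun x => bubble n x₀ ε x ^ sobolevExponent n) μ := by
  simp only [bubble_rpow_sobolevExponent hn, bubble_profile_eq_dilation hε]
  exact (integrable_comp_dilation
    (integrable_bubbleMass_integrand hE (two_pos.trans hn)) hε.ne' x₀).const_mul _

theorem integral_bubble_rpow (hE : finrank ℝ E = n) (hn : 2 < n) (hε : 0 < ε) :
    ∫ x, bubble n x₀ ε x ^ sobolevExponent n ∂μ = (ε ^ n)⁻¹ * bubbleMass n μ := by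
  simp only [bubble_rpow_sobolevExponent hn, bubble_profile_eq_dilation hε]
  rw [integral_const_mul,
    integral_comp_dilation (fun y : E => (1 + ‖y‖ ^ 2) ^ (-(n : ℝ))) hε.le, hE, bubbleMass]
  field_simp

theorem integrable_sq_norm_fderiv_bubble (hE : finrank ℝ E = n) (hn : 2 < n) (hε : 0 < ε) :
    Integrable (fun x => ‖fderiv ℝ (bubble n x₀ ε) x‖ ^ 2) μ := by
  simp only [sq_norm_fderiv_bubble_eq_dilation hε]
  exact (integrable_comp_dilation (integrable_bubbleEnergy_integrand hE hn) hε.ne' x₀).const_mul _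

theorem integral_sq_norm_fderiv_bubble (hE : finrank ℝ E = n) (hε : 0 < ε) :
    ∫ x, ‖fderiv ℝ (bubble n x₀ ε) x‖ ^ 2 ∂μ = ε ^ 2 / ε ^ n * bubbleEnergy n μ := by
  simp only [sq_norm_fderiv_bubble_eq_dilation hε]
  rw [integral_const_mul, integral_comp_dilation
    (fun y : E => ‖y‖ ^ 2 * (1 + ‖y‖ ^ 2) ^ (-(n : ℝ))) hε.le, hE, bubbleEnergy]
  field_simp

end Integrals

section TruncatedBubble

variable {E : Type*} [NormedAddCommGroup E] [InnerProductSpace ℝ E] [FiniteDimensional ℝ E] {n : ℕ}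
  {x₀ x : E} {ε : ℝ} {φ : ContDiffBump x₀}

/-- The bubble cut off by the bump function `φ`: the Brezis–Nirenberg test function. -/
def truncatedBubble (n : ℕ) (φ : ContDiffBump x₀) (ε : ℝ) (x : E) : ℝ := φ x * bubble n x₀ ε x

theorem contDiff_truncatedBubble (hε : ε ≠ 0) : ContDiff ℝ ∞ (truncatedBubble n φ ε) :=
  φ.contDiff.mul (contDiff_bubble hε)

theorem tsupport_truncatedBubble_subset : tsupport (truncatedBubble n φ ε) ⊆ closedBall x₀ φ.rOut :=
  φ.tsupport_eq ▸ tsupport_mul_subset_left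

theorem hasCompactSupport_truncatedBubble : HasCompactSupport (truncatedBubble n φ ε) :=
  φ.hasCompactSupport.mul_right

theorem truncatedBubble_eq_bubble (hx : x ∈ ball x₀ φ.rIn) :
    truncatedBubble n φ ε x = bubble n x₀ ε x := by
  rw [truncatedBubble, φ.one_of_mem_closedBall (ball_subset_closedBall hx), one_mul]

theorem fderiv_truncatedBubble_eq_fderiv_bubble (hx : x ∈ ball x₀ φ.rIn) :
    fderiv ℝ (truncatedBubble n φ ε) x = fderiv ℝ (bubble n x₀ ε) x :=
  Filter.EventuallyEq.fderiv_eq <|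
    (isOpen_ball.eventually_mem hx).mono fun _ hy => truncatedBubble_eq_bubble hy

theorem norm_fderiv_truncatedBubble_le (hε : ε ≠ 0) :
    ‖fderiv ℝ (truncatedBubble n φ ε) x‖ ≤
      ‖fderiv ℝ (bubble n x₀ ε) x‖ + bubble n x₀ ε x * ‖fderiv ℝ φ x‖ := by
  have hφ : DifferentiableAt ℝ φ x := φ.contDiff.differentiable one_ne_zero x
  have hb : DifferentiableAt ℝ (bubble n x₀ ε) x := (contDiff_bubble hε).differentiable (by simp) x
  have hmul : fderiv ℝ (truncatedBubble n φ ε) x =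
      φ x • fderiv ℝ (bubble n x₀ ε) x + bubble n x₀ ε x • fderiv ℝ φ x := fderiv_mul hφ hb
  calc ‖fderiv ℝ (truncatedBubble n φ ε) x‖
      ≤ ‖φ x • fderiv ℝ (bubble n x₀ ε) x‖ + ‖bubble n x₀ ε x • fderiv ℝ φ x‖ :=
        hmul ▸ norm_add_le _ _
    _ = φ x * ‖fderiv ℝ (bubble n x₀ ε) x‖ + bubble n x₀ ε x * ‖fderiv ℝ φ x‖ := by
        rw [norm_smul, norm_smul, norm_of_nonneg φ.nonneg, norm_of_nonneg bubble_nonneg]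
    _ ≤ _ := by
        gcongr
        exact mul_le_of_le_one_left (norm_nonneg _) φ.le_one

theorem exists_sq_norm_fderiv_truncatedBubble_le (hn : 2 ≤ n) (φ : ContDiffBump x₀) :
    ∃ C, 0 ≤ C ∧ ∀ ε ≠ 0, ∀ x ∉ ball x₀ φ.rIn,
      ‖fderiv ℝ (truncatedBubble n φ ε) x‖ ^ 2 ≤ C := by
  obtain ⟨M, hM⟩ := (φ.hasCompactSupport.fderiv (𝕜 := ℝ)).exists_bound_of_continuous
    (φ.contDiff.continuous_fderiv one_ne_zero)
  refine ⟨2 * (((n : ℝ) - 2) ^ 2 * (φ.rIn ^ 2) ^ (1 - (n : ℝ)) + (bubble n x₀ φ.rIn x₀ * M) ^ 2),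
    by positivity, fun ε hε x hx => ?_⟩
  have hnorm : φ.rIn ≤ ‖x - x₀‖ := by simpa [dist_eq_norm] using hx
  calc ‖fderiv ℝ (truncatedBubble n φ ε) x‖ ^ 2
      ≤ (‖fderiv ℝ (bubble n x₀ ε) x‖ + bubble n x₀ ε x * ‖fderiv ℝ φ x‖) ^ 2 := by
        gcongr
        exact norm_fderiv_truncatedBubble_le hε
    _ ≤ 2 * (‖fderiv ℝ (bubble n x₀ ε) x‖ ^ 2 + (bubble n x₀ ε x * ‖fderiv ℝ φ x‖) ^ 2) :=
        add_sq_le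
    _ ≤ _ := by
        gcongr
        · exact sq_norm_fderiv_bubble_le_of_le_norm (one_le_two.trans hn) hε φ.rIn_pos hnorm
        · exact mul_nonneg bubble_nonneg (norm_nonneg _)
        · exact bubble_nonneg
        · exact bubble_le_of_le_norm hn φ.rIn_pos hnorm
        · exact hM x

theorem exists_weighted_sq_norm_fderiv_truncatedBubble_le (hn : 2 ≤ n) {c : E → ℝ} {γ η : ℝ}
    (hγ : 0 ≤ γ) (hη : 0 ≤ η) (hcle : ∀ x ∈ closedBall x₀ φ.rOut, c x ≤ γ + η * ‖x - x₀‖ ^ 2) :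
    ∃ D, ∀ ε ≠ 0, ∀ x, c x * ‖fderiv ℝ (truncatedBubble n φ ε) x‖ ^ 2 ≤
      γ * ‖fderiv ℝ (bubble n x₀ ε) x‖ ^ 2 +
        η * ((n : ℝ) - 2) ^ 2 * truncatedBubble n φ ε x ^ 2 +
        (closedBall x₀ φ.rOut).indicator (fun _ => D) x := by
  obtain ⟨C, hC₀, hC⟩ := exists_sq_norm_fderiv_truncatedBubble_le hn φ
  set D := (γ + η * φ.rOut ^ 2) * C
  have hD₀ : 0 ≤ D := by positivity
  refine ⟨D, fun ε hε x => ?_⟩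
  have hind : 0 ≤ (closedBall x₀ φ.rOut).indicator (fun _ => D) x :=
    Set.indicator_nonneg (fun _ _ => hD₀) x
  by_cases hin : x ∈ ball x₀ φ.rIn
  · rw [fderiv_truncatedBubble_eq_fderiv_bubble hin, truncatedBubble_eq_bubble hin]
    have hout := closedBall_subset_closedBall φ.rIn_lt_rOut.le (ball_subset_closedBall hin)
    exact le_add_of_le_of_nonneg (mul_sq_norm_fderiv_bubble_le hη hε (hcle x hout)) hind
  refine le_add_of_nonneg_of_le (by positivity) ?_
  by_cases hout : x ∈ closedBall x₀ φ.rOut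
  · rw [Set.indicator_of_mem hout]
    have hx : ‖x - x₀‖ ≤ φ.rOut := by simpa [dist_eq_norm] using hout
    have hcx : c x ≤ γ + η * φ.rOut ^ 2 := (hcle x hout).trans (by gcongr)
    exact mul_le_mul hcx (hC ε hε x hin) (sq_nonneg _) (by have := φ.rOut_pos; positivity)
  · have hzero : fderiv ℝ (truncatedBubble n φ ε) x = 0 := by
      by_contra h
      exact hout (tsupport_truncatedBubble_subset (support_fderiv_subset ℝ h))
    simpa [hzero] using hind

variable [MeasurableSpace E] [BorelSpace E] {μ : Measure E}

theorem integrable_sq_truncatedBubble [IsFiniteMeasureOnCompacts μ] (hε : ε ≠ 0) :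
    Integrable (fun x => truncatedBubble n φ ε x ^ 2) μ := by
  have hcont : Continuous fun x => truncatedBubble n φ ε x ^ 2 :=
    (contDiff_truncatedBubble hε).continuous.pow 2
  exact hcont.integrable_of_hasCompactSupport
    (hasCompactSupport_truncatedBubble.comp_left (zero_pow two_ne_zero))

theorem exists_integral_weighted_energy_le [μ.IsAddHaarMeasure] (hE : finrank ℝ E = n) (hn : 2 < n)
    {c : E → ℝ} {γ η : ℝ} (hγ : 0 ≤ γ) (hη : 0 ≤ η)
    (hc : LocallyIntegrableOn c (closedBall x₀ φ.rOut) μ)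
    (hcle : ∀ x ∈ closedBall x₀ φ.rOut, c x ≤ γ + η * ‖x - x₀‖ ^ 2) :
    ∃ C, ∀ ε > 0, ∫ x, c x * ‖fderiv ℝ (truncatedBubble n φ ε) x‖ ^ 2 ∂μ ≤
      γ * (ε ^ 2 / ε ^ n * bubbleEnergy n μ) +
        η * ((n : ℝ) - 2) ^ 2 * ∫ x, truncatedBubble n φ ε x ^ 2 ∂μ + C := by
  obtain ⟨D, hD⟩ := exists_weighted_sq_norm_fderiv_truncatedBubble_le hn.le hγ hη hcle
  refine ⟨∫ x, (closedBall x₀ φ.rOut).indicator (fun _ => D) x ∂μ, fun ε hε => ?_⟩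
  have hint_energy := (integrable_sq_norm_fderiv_bubble (μ := μ) (x₀ := x₀) hE hn hε).const_mul γ
  have hint_sq := (integrable_sq_truncatedBubble (n := n) (φ := φ) (μ := μ) hε.ne').const_mul
    (η * ((n : ℝ) - 2) ^ 2)
  have hint_sum : Integrable (fun x => γ * ‖fderiv ℝ (bubble n x₀ ε) x‖ ^ 2 +
      η * ((n : ℝ) - 2) ^ 2 * truncatedBubble n φ ε x ^ 2) μ := hint_energy.add hint_sq
  have hint_ind : Integrable (fun x => (closedBall x₀ φ.rOut).indicator (fun _ => D) x) μ :=
    (integrable_indicator_iff measurableSet_closedBall).2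
      (integrableOn_const (isCompact_closedBall x₀ φ.rOut).measure_lt_top.ne)
  have hint_weighted := integrable_mul_sq_norm_fderiv hc
    ((contDiff_truncatedBubble (n := n) hε.ne').of_le (by simp)) hasCompactSupport_truncatedBubble
    tsupport_truncatedBubble_subset
  refine (integral_mono hint_weighted (hint_sum.add hint_ind) (hD ε hε.ne')).trans_eq ?_
  simp only [Pi.add_apply]
  rw [integral_add hint_sum hint_ind, integral_add hint_energy hint_sq,
    integral_const_mul, integral_const_mul, integral_sq_norm_fderiv_bubble hE hε]

theorem integrable_truncatedBubble_rpow [IsFiniteMeasureOnCompacts μ] {q : ℝ} (hq : 0 < q)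
    (hε : ε ≠ 0) : Integrable (fun x => |truncatedBubble n φ ε x| ^ q) μ :=
  ((contDiff_truncatedBubble hε).continuous.abs.rpow_const
    fun _ => Or.inr hq.le).integrable_of_hasCompactSupport
    (hasCompactSupport_truncatedBubble.comp_left (g := fun t => |t| ^ q)
      (by simp [zero_rpow hq.ne']))

theorem integral_truncatedBubble_rpow_pos [IsFiniteMeasureOnCompacts μ] [μ.IsOpenPosMeasure]
    {q : ℝ} (hq : 0 < q) (hε : ε ≠ 0) : 0 < ∫ x, |truncatedBubble n φ ε x| ^ q ∂μ := by
  refine integral_pos_of_integrable_nonneg_nonzero (x := x₀)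
    ((contDiff_truncatedBubble hε).continuous.abs.rpow_const fun _ => Or.inr hq.le)
    (integrable_truncatedBubble_rpow hq hε) (fun x => rpow_nonneg (abs_nonneg _) q) ?_
  rw [truncatedBubble_eq_bubble (mem_ball_self φ.rIn_pos), abs_of_pos (bubble_pos hε)]
  exact (rpow_pos_of_pos (bubble_pos hε) q).ne'

theorem exists_bubbleMass_le [μ.IsAddHaarMeasure] (hE : finrank ℝ E = n) (hn : 2 < n)
    (φ : ContDiffBump x₀) :
    ∃ C, 0 ≤ C ∧ ∀ ε > 0, (ε ^ n)⁻¹ * bubbleMass n μ ≤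
      ∫ x, |truncatedBubble n φ ε x| ^ sobolevExponent n ∂μ + C := by
  set q := sobolevExponent n
  set D := (φ.rIn ^ 2 / (1 + φ.rIn ^ 2)) ^ (-(n : ℝ))
  refine ⟨D * bubbleMass n μ, mul_nonneg (by positivity) (bubbleMass_nonneg n μ), fun ε hε => ?_⟩
  have hpointwise (x : E) :
      bubble n x₀ ε x ^ q ≤ |truncatedBubble n φ ε x| ^ q + D * bubble n x₀ 1 x ^ q := by
    by_cases hin : x ∈ ball x₀ φ.rIn
    · rw [truncatedBubble_eq_bubble hin, abs_of_nonneg bubble_nonneg]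
      exact le_add_of_nonneg_right (mul_nonneg (by positivity) (rpow_nonneg bubble_nonneg q))
    · have hnorm : φ.rIn ≤ ‖x - x₀‖ := by simpa [dist_eq_norm] using hin
      exact le_add_of_nonneg_of_le (by positivity) (bubble_rpow_le_of_le_norm hn φ.rIn_pos hnorm)
  have hint_trunc := integrable_truncatedBubble_rpow (n := n) (φ := φ) (μ := μ)
    (sobolevExponent_pos hn) hε.ne'
  have hint_tail := (integrable_bubble_rpow (μ := μ) (x₀ := x₀) hE hn one_pos).const_mul D
  calc (ε ^ n)⁻¹ * bubbleMass n μ = ∫ x, bubble n x₀ ε x ^ q ∂μ :=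
        (integral_bubble_rpow hE hn hε).symm
    _ ≤ ∫ x, |truncatedBubble n φ ε x| ^ q + D * bubble n x₀ 1 x ^ q ∂μ :=
        integral_mono (integrable_bubble_rpow hE hn hε) (hint_trunc.add hint_tail) hpointwise
    _ = ∫ x, |truncatedBubble n φ ε x| ^ q ∂μ + D * bubbleMass n μ := by
        rw [integral_add hint_trunc hint_tail, integral_const_mul,
          integral_bubble_rpow hE hn one_pos, one_pow, inv_one, one_mul]

theorem exists_bubbleMass_rpow_le [μ.IsAddHaarMeasure] (hE : finrank ℝ E = n) (hn : 2 < n)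
    (φ : ContDiffBump x₀) :
    ∃ C, ∀ ε > 0, ε ^ 2 / ε ^ n * bubbleMass n μ ^ (((n : ℝ) - 2) / n) ≤
      (∫ x, |truncatedBubble n φ ε x| ^ sobolevExponent n ∂μ) ^ (((n : ℝ) - 2) / n) + C := by
  obtain ⟨C, hC₀, hC⟩ := exists_bubbleMass_le (μ := μ) hE hn φ
  have hn' : (2 : ℝ) < n := by exact_mod_cast hn
  set θ := ((n : ℝ) - 2) / n
  have hθ₀ : 0 ≤ θ := div_nonneg (by linarith) (by linarith)
  have hθ₁ : θ ≤ 1 := (div_le_one (by linarith)).2 (by linarith)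
  refine ⟨C ^ θ, fun ε hε => ?_⟩
  have hscale : ((ε ^ n)⁻¹) ^ θ = ε ^ 2 / ε ^ n := by
    rw [← rpow_natCast, ← rpow_neg hε.le, ← rpow_mul hε.le, ← rpow_natCast ε 2, ← rpow_sub hε]
    congr 1
    simp only [θ, Nat.cast_ofNat]
    field_simp
    ring
  have hmass₀ := bubbleMass_nonneg n μ
  calc ε ^ 2 / ε ^ n * bubbleMass n μ ^ θ = ((ε ^ n)⁻¹ * bubbleMass n μ) ^ θ := by
        rw [mul_rpow (by positivity) hmass₀, hscale]
    _ ≤ (∫ x, |truncatedBubble n φ ε x| ^ sobolevExponent n ∂μ + C) ^ θ :=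
        rpow_le_rpow (by positivity) (hC ε hε) hθ₀
    _ ≤ _ := rpow_add_le_add_rpow (integral_nonneg fun x => rpow_nonneg (abs_nonneg _) _)
        hC₀ hθ₀ hθ₁

theorem not_integrable_sq_truncatedBubble_zero [μ.IsAddHaarMeasure] (hE : finrank ℝ E = n)
    (hn : 4 ≤ n) : ¬ Integrable (fun x => truncatedBubble n φ 0 x ^ 2) μ := by
  intro hint
  have : Nontrivial E := nontrivial_of_finrank_pos (R := ℝ) (by omega)
  have hball : IntegrableOn (fun x : E => ‖x‖ ^ (-(2 * ((n : ℝ) - 2)))) (ball 0 φ.rIn) μ := by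
    refine (hint.comp_add_left x₀).integrableOn.congr_fun (fun x hx => ?_) measurableSet_ball
    have hx' : x₀ + x ∈ ball x₀ φ.rIn := by simpa using hx
    simp only [truncatedBubble_eq_bubble hx', sq_bubble_zero, add_sub_cancel_left]
  have hlt := (integrableOn_ball_norm_rpow_iff φ.rIn_pos _).1 hball
  have hn' : (4 : ℝ) ≤ n := by exact_mod_cast hn
  rw [hE] at hlt
  linarith

theorem exists_lt_integral_sq_truncatedBubble [μ.IsAddHaarMeasure] (hE : finrank ℝ E = n)
    (hn : 4 ≤ n) (φ : ContDiffBump x₀) (M : ℝ) :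
    ∃ ε > 0, M < ∫ x, truncatedBubble n φ ε x ^ 2 ∂μ := by
  have : Nontrivial E := nontrivial_of_finrank_pos (R := ℝ) (by omega)
  obtain ⟨s, -, hs_pos, hs_lim⟩ := exists_seq_strictAnti_tendsto (0 : ℝ)
  have hlim : ∀ᵐ x ∂μ, Tendsto (fun i => truncatedBubble n φ (s i) x ^ 2) atTop
      (𝓝 (truncatedBubble n φ 0 x ^ 2)) := by
    filter_upwards [Measure.ae_ne μ x₀] with x hx
    exact (((continuousAt_bubble_scale hx 0).tendsto.comp hs_lim).const_mul (φ x)).pow 2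
  have htop := tendsto_integral_atTop_of_not_integrable
    (fun i => integrable_sq_truncatedBubble (hs_pos i).ne')
    (fun i => .of_forall fun x => sq_nonneg _) hlim (not_integrable_sq_truncatedBubble_zero hE hn)
  obtain ⟨i, hi⟩ := (htop.eventually_gt_atTop M).exists
  exact ⟨s i, hs_pos i, hi⟩

theorem exists_rayleigh_truncatedBubble_lt [μ.IsAddHaarMeasure] (hE : finrank ℝ E = n) (hn : 4 ≤ n)
    {c : E → ℝ} {γ η lam : ℝ} (hγ : 0 ≤ γ) (hη : 0 ≤ η) (hηlam : η * ((n : ℝ) - 2) ^ 2 < lam)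
    (hc : LocallyIntegrableOn c (closedBall x₀ φ.rOut) μ)
    (hcle : ∀ x ∈ closedBall x₀ φ.rOut, c x ≤ γ + η * ‖x - x₀‖ ^ 2) :
    ∃ ε > 0, ∫ x, c x * ‖fderiv ℝ (truncatedBubble n φ ε) x‖ ^ 2 ∂μ -
        lam * ∫ x, truncatedBubble n φ ε x ^ 2 ∂μ <
      γ * bubbleQuotient n μ *
        (∫ x, |truncatedBubble n φ ε x| ^ sobolevExponent n ∂μ) ^ (2 / sobolevExponent n) := by
  have hn₂ : 2 < n := by omega
  obtain ⟨C₁, hC₁⟩ := exists_integral_weighted_energy_le hE hn₂ hγ hη hc hcle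
  obtain ⟨C₂, hC₂⟩ := exists_bubbleMass_rpow_le (μ := μ) hE hn₂ φ
  set S := bubbleQuotient n μ
  obtain ⟨ε, hε, hlarge⟩ := exists_lt_integral_sq_truncatedBubble (μ := μ) hE hn φ
    ((C₁ + γ * S * C₂) / (lam - η * ((n : ℝ) - 2) ^ 2))
  refine ⟨ε, hε, ?_⟩
  rw [two_div_sobolevExponent]
  set θ := ((n : ℝ) - 2) / n
  set Q := ∫ x, |truncatedBubble n φ ε x| ^ sobolevExponent n ∂μ
  set L := ∫ x, truncatedBubble n φ ε x ^ 2 ∂μ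
  have hcoupling : C₁ + γ * S * C₂ < L * (lam - η * ((n : ℝ) - 2) ^ 2) :=
    (div_lt_iff₀ (sub_pos.2 hηlam)).1 hlarge
  have henergy : bubbleEnergy n μ = S * bubbleMass n μ ^ θ :=
    (div_mul_cancel₀ _ (rpow_pos_of_pos (bubbleMass_pos hE (by omega)) _).ne').symm
  have hprincipal : γ * (ε ^ 2 / ε ^ n * bubbleEnergy n μ) ≤ γ * S * (Q ^ θ + C₂) := by
    rw [henergy, mul_left_comm _ S, ← mul_assoc γ S]
    exact mul_le_mul_of_nonneg_left (hC₂ ε hε) (mul_nonneg hγ (bubbleQuotient_nonneg n μ))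
  linarith [hC₁ ε hε]

end TruncatedBubble

section CriticalLevel

variable {E : Type*} [NormedAddCommGroup E] [InnerProductSpace ℝ E] [FiniteDimensional ℝ E]
  [MeasurableSpace E] [BorelSpace E] {μ : Measure E} [μ.IsAddHaarMeasure] {n : ℕ} {Ω : Set E}
  {x₀ : E}

theorem exists_normalized_rayleigh_lt_bubbleQuotient (hE : finrank ℝ E = n) (hn : 4 ≤ n)
    (hΩ : IsOpen Ω) (hx₀ : x₀ ∈ Ω) {c : E → ℝ} (hc : LocallyIntegrableOn c Ω μ) {γ lam : ℝ}
    (hγ : 0 ≤ γ) (hcle : ∀ η > 0, ∀ᶠ x in 𝓝 x₀, c x ≤ γ + η * ‖x - x₀‖ ^ 2) (hlam : 0 < lam) :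
    ∃ u : E → ℝ, ContDiff ℝ ∞ u ∧ HasCompactSupport u ∧ tsupport u ⊆ Ω ∧
      (∫ x, |u x| ^ sobolevExponent n ∂μ) ^ (1 / sobolevExponent n) = 1 ∧
      ∫ x, c x * ‖fderiv ℝ u x‖ ^ 2 ∂μ - lam * ∫ x, u x ^ 2 ∂μ < γ * bubbleQuotient n μ := by
  have hn₄ : (4 : ℝ) ≤ n := by exact_mod_cast hn
  have hn₂ : 0 < ((n : ℝ) - 2) ^ 2 := pow_pos (by linarith) 2
  set η := lam / 2 / ((n : ℝ) - 2) ^ 2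
  have hη : 0 < η := by positivity
  have hηlam : η * ((n : ℝ) - 2) ^ 2 < lam := by
    rw [div_mul_cancel₀ _ hn₂.ne']
    exact half_lt_self hlam
  obtain ⟨R, hR, hball⟩ := nhds_basis_closedBall.eventually_iff.1
    ((hΩ.eventually_mem hx₀).and (hcle η hη))
  let φ : ContDiffBump x₀ := ⟨R / 2, R, half_pos hR, half_lt_self hR⟩
  have hφΩ : closedBall x₀ φ.rOut ⊆ Ω := fun x hx => (hball hx).1
  obtain ⟨ε, hε, hlt⟩ := exists_rayleigh_truncatedBubble_lt hE hn hγ hη.le hηlam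
    (hc.mono_set hφΩ) fun x hx => (hball hx).2
  have hsmooth := contDiff_truncatedBubble (n := n) (φ := φ) hε.ne'
  have hq := sobolevExponent_pos (n := n) (by omega)
  obtain ⟨t, hmass, hrayleigh⟩ := exists_normalized_of_rayleigh_lt hq.ne'
    (hsmooth.differentiable (by simp)) (integral_truncatedBubble_rpow_pos hq hε.ne') hlt
  exact ⟨fun x => t * truncatedBubble n φ ε x, contDiff_const.mul hsmooth,
    hasCompactSupport_truncatedBubble.mul_left,
    (tsupport_mul_subset_right.trans tsupport_truncatedBubble_subset).trans hφΩ, hmass, hrayleigh⟩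

theorem stmt_2_general (hE : finrank ℝ E = n) (hn : 4 ≤ n) (hΩ : IsOpen Ω) (hx₀ : x₀ ∈ Ω)
    {a b : E → ℝ} (ha : LocallyIntegrableOn a Ω μ) (hb : LocallyIntegrableOn b Ω μ)
    {γ₀ lam : ℝ} (hγ₀ : 0 ≤ γ₀)
    (hale : ∀ η > 0, ∀ᶠ x in 𝓝 x₀, a x ≤ γ₀ + η * ‖x - x₀‖ ^ 2)
    (hble : ∀ η > 0, ∀ᶠ x in 𝓝 x₀, b x ≤ γ₀ + η * ‖x - x₀‖ ^ 2) (hlam : 0 < lam) :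
    ∃ u v : E → ℝ,
      ContDiff ℝ ∞ u ∧ HasCompactSupport u ∧ tsupport u ⊆ Ω ∧
      ContDiff ℝ ∞ v ∧ HasCompactSupport v ∧ tsupport v ⊆ Ω ∧
      (∫ x in Ω, |u x| ^ sobolevExponent n ∂μ) ^ (1 / sobolevExponent n) = 1 ∧
      (∫ x in Ω, |v x| ^ sobolevExponent n ∂μ) ^ (1 / sobolevExponent n) = 1 ∧
      (1 / 2) * (∫ x in Ω, a x * ‖fderiv ℝ u x‖ ^ 2 ∂μ) +
          (1 / 2) * (∫ x in Ω, b x * ‖fderiv ℝ v x‖ ^ 2 ∂μ) - lam * ∫ x in Ω, u x * v x ∂μ <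
        γ₀ * bubbleQuotient n μ := by
  have hmean : LocallyIntegrableOn (fun x => 1 / 2 * a x + 1 / 2 * b x) Ω μ :=
    (ha.smul (1 / 2 : ℝ)).add (hb.smul (1 / 2 : ℝ))
  have hmean_le (η : ℝ) (hη : η > 0) :
      ∀ᶠ x in 𝓝 x₀, 1 / 2 * a x + 1 / 2 * b x ≤ γ₀ + η * ‖x - x₀‖ ^ 2 := by
    filter_upwards [hale η hη, hble η hη] with x hax hbx
    linarith
  obtain ⟨u, hu, hcs, huΩ, hmass, hlt⟩ := exists_normalized_rayleigh_lt_bubbleQuotient hE hn hΩ hx₀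
    hmean hγ₀ hmean_le hlam
  have hu₀ (x : E) (hx : x ∉ Ω) : u x = 0 := image_eq_zero_of_notMem_tsupport fun h => hx (huΩ h)
  have hdu₀ (x : E) (hx : x ∉ Ω) : fderiv ℝ u x = 0 := by
    by_contra h
    exact hx (huΩ (support_fderiv_subset ℝ h))
  have hu₁ : ContDiff ℝ 1 u := hu.of_le (by simp)
  have hint_a := (integrable_mul_sq_norm_fderiv ha hu₁ hcs huΩ).const_mul (1 / 2)
  have hint_b := (integrable_mul_sq_norm_fderiv hb hu₁ hcs huΩ).const_mul (1 / 2)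
  have hsplit : ∫ x, (1 / 2 * a x + 1 / 2 * b x) * ‖fderiv ℝ u x‖ ^ 2 ∂μ =
      1 / 2 * ∫ x, a x * ‖fderiv ℝ u x‖ ^ 2 ∂μ + 1 / 2 * ∫ x, b x * ‖fderiv ℝ u x‖ ^ 2 ∂μ := by
    rw [← integral_const_mul, ← integral_const_mul, ← integral_add hint_a hint_b]
    simp only [add_mul, mul_assoc]
  have hrestrict {f : E → ℝ} (hf : ∀ x ∉ Ω, f x = 0) : ∫ x in Ω, f x ∂μ = ∫ x, f x ∂μ :=
    setIntegral_eq_integral_of_forall_compl_eq_zero hf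
  have hmass_Ω : (∫ x in Ω, |u x| ^ sobolevExponent n ∂μ) ^ (1 / sobolevExponent n) = 1 := by
    rw [hrestrict fun x hx => by simp [hu₀ x hx, (sobolevExponent_pos (n := n) (by omega)).ne'],
      hmass]
  refine ⟨u, u, hu, hcs, huΩ, hu, hcs, huΩ, hmass_Ω, hmass_Ω, ?_⟩
  rw [hrestrict fun x hx => by simp [hdu₀ x hx], hrestrict fun x hx => by simp [hdu₀ x hx],
    hrestrict fun x hx => by simp [hu₀ x hx], ← hsplit]
  simpa only [sq (u _)] using hlt

end CriticalLevel

theorem stmt_2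
    (N : ℕ) (hN : 4 ≤ N)
    (Ω : Set (EuclideanSpace ℝ (Fin N)))
    (hΩo : IsOpen Ω) (hΩb : Bornology.IsBounded Ω) (hΩne : Ω.Nonempty)
    (x₀ : EuclideanSpace ℝ (Fin N)) (hx₀ : x₀ ∈ Ω)
    (a b : EuclideanSpace ℝ (Fin N) → ℝ)
    (ha : Continuous a) (hb : Continuous b)
    (hapos : ∀ x ∈ closure Ω, 0 < a x) (hbpos : ∀ x ∈ closure Ω, 0 < b x)
    (γ₀ : ℝ) (haγ : a x₀ = γ₀) (hbγ : b x₀ = γ₀)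
    (hamin : ∀ x ∈ closure Ω, γ₀ ≤ a x) (hbmin : ∀ x ∈ closure Ω, γ₀ ≤ b x)
    (k l A B : ℝ) (hA : 0 < A) (hB : 0 < B)
    (hk : 2 < k) (hl : 2 < l)
    (hexpa : Tendsto (fun x => (a x - a x₀ - A * ‖x - x₀‖ ^ k) / ‖x - x₀‖ ^ k)
      (𝓝[≠] x₀) (𝓝 0))
    (hexpb : Tendsto (fun x => (b x - b x₀ - B * ‖x - x₀‖ ^ l) / ‖x - x₀‖ ^ l)
      (𝓝[≠] x₀) (𝓝 0))
    (q : ℝ) (hq : q = 2 * (N : ℝ) / ((N : ℝ) - 2))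
    (K₁ K₂ S : ℝ)
    (hK₁ : K₁ = ((N : ℝ) - 2) ^ 2 *
      ∫ y : EuclideanSpace ℝ (Fin N), ‖y‖ ^ 2 * (1 + ‖y‖ ^ 2) ^ (-(N : ℝ)))
    (hK₂ : K₂ = (∫ y : EuclideanSpace ℝ (Fin N), (1 + ‖y‖ ^ 2) ^ (-(N : ℝ)))
      ^ (((N : ℝ) - 2) / (N : ℝ)))
    (hS : S = K₁ / K₂)
    (lam : ℝ) (hlam : 0 < lam) :
    ∃ u v : EuclideanSpace ℝ (Fin N) → ℝ,
      ContDiff ℝ (⊤ : ℕ∞) u ∧ HasCompactSupport u ∧ tsupport u ⊆ Ω ∧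
      ContDiff ℝ (⊤ : ℕ∞) v ∧ HasCompactSupport v ∧ tsupport v ⊆ Ω ∧
      (∫ x in Ω, |u x| ^ q) ^ (1 / q) = 1 ∧
      (∫ x in Ω, |v x| ^ q) ^ (1 / q) = 1 ∧
      (1 / 2) * (∫ x in Ω, a x * ‖fderiv ℝ u x‖ ^ 2)
        + (1 / 2) * (∫ x in Ω, b x * ‖fderiv ℝ v x‖ ^ 2)
        - lam * ∫ x in Ω, u x * v x
      < γ₀ * S := by
  subst hq hS hK₁ hK₂ haγ
  exact stmt_2_general finrank_euclideanSpace_fin hN hΩo hx₀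
    (ha.locallyIntegrable.locallyIntegrableOn Ω) (hb.locallyIntegrable.locallyIntegrableOn Ω)
    (hapos x₀ (subset_closure hx₀)).le
    (fun _ hη => eventually_le_add_mul_sq_of_tendsto hk hη hexpa)
    (fun _ hη => hbγ ▸ eventually_le_add_mul_sq_of_tendsto hl hη hexpb) hlam
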